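/- A regular ω-language F ⊆ X^ω is of first Baire category in the Cantor space X^ω if and only if no ζ ∈ F is a disjunctive ω-word. -/

import Mathlib

open Set MeasureTheory Computability

namespace AutoBaire

/-- The Cantor topology on the space of ω-words over `X`:
the product of the discrete topology on `X`. -/
def cantorTop (X : Type) : TopologicalSpace (ℕ → X) :=
  @Pi.topologicalSpace ℕ (fun _ => X) (fun _ => ⊥)

/-- The Borel σ-algebra of the Cantor space. -/
def cantorBorel (X : Type) : MeasurableSpace (ℕ → X) :=
  @borel (ℕ → X) (cantorTop X)

variable {X : Type}

/-- Concatenation `w·ξ` of a finite word with an ω-word. -/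
def wcat (w : List X) (ξ : ℕ → X) : ℕ → X :=
  Stream'.appendStream' w ξ

/-- The ball (cylinder) `w·X^ω`. -/
def cyl (w : List X) : Set (ℕ → X) := {ξ | ∃ η : ℕ → X, ξ = wcat w η}

/-- The ω-language `W·A` for a language `W` and an ω-language `A`. -/
def catOmega (W : Language X) (A : Set (ℕ → X)) : Set (ℕ → X) :=
  {ξ | ∃ w ∈ W, ∃ η ∈ A, ξ = wcat w η}

/-- `V^ω`: the set of ω-words that are infinite concatenations
`v₁·v₂·⋯` of non-empty words `vᵢ ∈ V`. -/
def omegaPow (V : Language X) : Set (ℕ → X) :=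
  {ξ | ∃ f : ℕ → List X, (∀ i, f i ∈ V ∧ f i ≠ []) ∧
    ∀ k, ξ ∈ cyl (((List.range k).map f).flatten)}

/-- Regular languages: those obtained from finite languages via the operations
union, concatenation and star. -/
inductive IsRegLang : Language X → Prop
  | finite (W : Language X) : (W : Set (List X)).Finite → IsRegLang W
  | union (W V : Language X) : IsRegLang W → IsRegLang V → IsRegLang (W + V)
  | concat (W V : Language X) : IsRegLang W → IsRegLang V → IsRegLang (W * V)
  | star (W : Language X) : IsRegLang W → IsRegLang (W∗)

/-- Regular ω-languages: finite unions `⋃ᵢ Wᵢ·Vᵢ^ω` with `Wᵢ, Vᵢ` regular. -/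
def IsRegOmega (F : Set (ℕ → X)) : Prop :=
  ∃ (n : ℕ) (W V : Fin n → Language X),
    (∀ i, IsRegLang (W i) ∧ IsRegLang (V i)) ∧
    F = ⋃ i, catOmega (W i) (omegaPow (V i))

/-- `X*·w·X^ω`: the set of ω-words containing `w` as an infix. -/
def infixOcc (w : List X) : Set (ℕ → X) :=
  {ξ | ∃ u : List X, ξ ∈ cyl (u ++ w)}

/-- An ω-word is disjunctive if every finite word occurs in it as an infix. -/
def Disjunctive (ξ : ℕ → X) : Prop := ∀ w : List X, ξ ∈ infixOcc w

/-- Ultimately periodic ω-words: `ξ = w·v·v·v·⋯` with `v ≠ e`. -/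
def UltPeriodic (ξ : ℕ → X) : Prop :=
  ∃ (w v : List X) (h : v ≠ []), ξ = wcat w (Stream'.cycle v h)

/-- The Automatic Baire property: `F Δ E ⊆ F'` for some regular open
ω-language `E` and some regular ω-language `F'` of first Baire category. -/
def HasABP (F : Set (ℕ → X)) : Prop :=
  ∃ E F' : Set (ℕ → X),
    IsRegOmega E ∧ @IsOpen _ (cantorTop X) E ∧
    IsRegOmega F' ∧ @IsMeagre _ (cantorTop X) F' ∧
    symmDiff F E ⊆ F'

/-- The measure is finite and non-null: `0 < μ(X^ω) < ∞`. -/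
def FiniteNonNull (μ : @MeasureTheory.Measure (ℕ → X) (cantorBorel X)) : Prop :=
  0 < μ Set.univ ∧ μ Set.univ < ⊤

/-- `supp(μ) = X^ω`: every non-empty open set has positive measure. -/
def FullSupport (μ : @MeasureTheory.Measure (ℕ → X) (cantorBorel X)) : Prop :=
  ∀ U : Set (ℕ → X), @IsOpen _ (cantorTop X) U → U.Nonempty → 0 < μ U

/-- The balance condition: there is `c > 0` such that for all `w ∈ X*`, `x ∈ X`
either `μ(wx·X^ω) = 0` or `c·μ(w·X^ω) ≤ μ(wx·X^ω)`. -/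
def Balanced (μ : @MeasureTheory.Measure (ℕ → X) (cantorBorel X)) : Prop :=
  ∃ c : ENNReal, 0 < c ∧ ∀ (w : List X) (x : X),
    μ (cyl (w ++ [x])) = 0 ∨ c * μ (cyl w) ≤ μ (cyl (w ++ [x]))

/-! Let `ζ = w·η` be disjunctive with `η ∈ V^ω`, where `V∗` is regular. Every infix of `η` is an
infix of a word of `V∗`, so `V∗` omits no infix. Having only finitely many left quotients, `V∗` is
therefore not nowhere dense as a language: some `v` satisfies `∀ y, ∃ t, v·y·t ∈ V∗`.
Given dense open sets `U₀, U₁, …`, one then chooses `yₖ` and `tₖ` in turn so that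
`w·(v·y₀·t₀)⋯(v·yₖ·tₖ)·X^ω ⊆ Uₖ` and `v·yₖ·tₖ ∈ V∗`; the limit lies in `w·(V∗)^ω = w·V^ω` and in
every `Uₖ`, so `w·V^ω` is not meagre. Conversely, for each of the countably many `z`, the ω-words
containing `z` form a dense open set, so the non-disjunctive ω-words form a meagre set. -/

section RegularLanguages

variable {α : Type*} {L V W : Language α}

theorem isRegular_of_finite_cover {𝒟 : Set (Language α)} (h𝒟 : 𝒟.Finite)
    (hL : ∀ x y, x ++ y ∈ L → ∃ D ∈ 𝒟, y ∈ D ∧ ∀ y' ∈ D, x ++ y' ∈ L) : L.IsRegular := by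
  refine .of_finite_range_leftQuotient ((h𝒟.finite_subsets.image sSup).subset ?_)
  rintro _ ⟨x, rfl⟩
  refine ⟨{D ∈ 𝒟 | D ≤ L.leftQuotient x}, sep_subset _ _, le_antisymm ?_ ?_⟩
  · exact sSup_le fun D hD => hD.2
  · intro y hy
    obtain ⟨D, hD, hyD, hDx⟩ := hL x y hy
    exact le_sSup (show D ∈ {D ∈ 𝒟 | D ≤ L.leftQuotient x} from ⟨hD, hDx⟩) hyD

theorem isRegular_of_finite (hL : (L : Set (List α)).Finite) : L.IsRegular := by
  have hsuffixes : (⋃ w ∈ (L : Set (List α)), {y | y <:+ w}).Finite :=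
    hL.biUnion fun w _ => w.tails.finite_toSet.subset fun y hy => (List.mem_tails y w).2 hy
  refine isRegular_of_finite_cover (hsuffixes.image fun y => ({y} : Set (List α))) ?_
  intro x y hxy
  refine ⟨_, mem_image_of_mem _ (mem_biUnion hxy (List.suffix_append x y)), rfl, ?_⟩
  rintro _ rfl
  exact hxy

theorem isRegular_mul (hW : W.IsRegular) (hV : V.IsRegular) : (W * V).IsRegular := by
  refine isRegular_of_finite_cover ((hW.finite_range_leftQuotient.image (· * V)).union
    hV.finite_range_leftQuotient) ?_
  intro x y hxy
  obtain ⟨a, ha, b, hb, hab⟩ := Language.mem_mul.1 hxy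
  rcases List.append_eq_append_iff.1 hab with ⟨c, rfl, rfl⟩ | ⟨c, rfl, rfl⟩
  · refine ⟨V.leftQuotient c, .inr ⟨c, rfl⟩, hb, fun y' hy' => ?_⟩
    rw [List.append_assoc]
    exact Language.append_mem_mul ha hy'
  · refine ⟨W.leftQuotient x * V, .inl (mem_image_of_mem _ ⟨x, rfl⟩),
      Language.append_mem_mul ha hb, fun y' hy' => ?_⟩
    obtain ⟨c', hc', b', hb', rfl⟩ := Language.mem_mul.1 hy'
    rw [← List.append_assoc]
    exact Language.append_mem_mul hc' hb'

theorem append_mem_kstar {v x : List α} (hv : v ∈ W) (hx : x ∈ W∗) : v ++ x ∈ W∗ := by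
  rw [← Language.one_add_self_mul_kstar_eq_kstar, Language.mem_add]
  exact .inr (Language.append_mem_mul hv hx)

theorem isRegular_kstar (hW : W.IsRegular) : (W∗).IsRegular := by
  refine isRegular_of_finite_cover
    ((hW.finite_range_leftQuotient.image (· * W∗)).insert (W∗)) ?_
  rintro x y ⟨L, hxy, hL⟩
  induction L generalizing x with
  | nil =>
    obtain ⟨rfl, rfl⟩ := List.append_eq_nil_iff.1 hxy
    exact ⟨W∗, mem_insert _ _, Language.nil_mem_kstar W, fun y' hy' => hy'⟩
  | cons v L ih =>
    have hv : v ∈ W := hL v List.mem_cons_self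
    have hL' : ∀ u ∈ L, u ∈ W := fun u hu => hL u (List.mem_cons_of_mem v hu)
    rcases List.append_eq_append_iff.1 hxy with ⟨c, rfl, rfl⟩ | ⟨c, rfl, hcy⟩
    · refine ⟨W.leftQuotient x * W∗, .inr (mem_image_of_mem _ ⟨x, rfl⟩),
        Language.append_mem_mul hv (Language.join_mem_kstar hL'), fun y' hy' => ?_⟩
      obtain ⟨c', hc', b, hb, rfl⟩ := Language.mem_mul.1 hy'
      rw [← List.append_assoc]
      exact append_mem_kstar hc' hb
    · obtain ⟨D, hD, hyD, hDc⟩ := ih c hcy.symm hL'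
      refine ⟨D, hD, hyD, fun y' hy' => ?_⟩
      rw [List.append_assoc]
      exact append_mem_kstar hv (hDc y' hy')

/-- Nowhere dense languages: every word `v` has an extension `v·y` that is not a prefix of any
word of `L`. -/
def IsNowhereDenseLang (L : Language α) : Prop :=
  ∀ v, ∃ y, ∀ t, v ++ y ++ t ∉ L

theorem IsNowhereDenseLang.exists_forall_notMem (hL : IsNowhereDenseLang L)
    (hreg : L.IsRegular) : ∃ z, ∀ u t, u ++ z ++ t ∉ L := by
  have hquot : ∃ z, ∀ Q ∈ range L.leftQuotient, ∀ t, z ++ t ∉ Q := by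
    refine hreg.finite_range_leftQuotient.induction_on_subset _
      ⟨[], fun Q hQ => absurd hQ (notMem_empty Q)⟩ ?_
    rintro _ 𝒬 ⟨u, rfl⟩ - - ⟨z, hz⟩
    obtain ⟨y, hy⟩ := hL (u ++ z)
    refine ⟨z ++ y, ?_⟩
    rintro Q (rfl | hQ) t
    · simpa [Language.mem_leftQuotient] using hy t
    · simpa using hz Q hQ (y ++ t)
  obtain ⟨z, hz⟩ := hquot
  exact ⟨z, fun u t h => hz _ ⟨u, rfl⟩ t (by simpa [Language.mem_leftQuotient] using h)⟩

theorem length_le_length_flatten {l : List (List α)} (hl : ∀ w ∈ l, w ≠ []) :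
    l.length ≤ l.flatten.length := by
  have h := List.length_le_sum_of_one_le (l.map List.length) (by
    simpa [Nat.one_le_iff_ne_zero] using hl)
  rwa [List.length_map, ← List.length_flatten] at h

end RegularLanguages

theorem IsRegLang.isRegular {W : Language X} (hW : IsRegLang W) : W.IsRegular := by
  induction hW with
  | finite W hW => exact isRegular_of_finite hW
  | union W V _ _ ihW ihV => exact ihW.add ihV
  | concat W V _ _ ihW ihV => exact isRegular_mul ihW ihV
  | star W _ ih => exact isRegular_kstar ih

section Cylinders

variable {u v w : List X} {ξ η : ℕ → X}

theorem wcat_append (u v : List X) (ξ : ℕ → X) : wcat (u ++ v) ξ = wcat u (wcat v ξ) :=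
  Stream'.append_append_stream u v ξ

theorem wcat_mem_cyl (w : List X) (ξ : ℕ → X) : wcat w ξ ∈ cyl w := ⟨ξ, rfl⟩

theorem wcat_mem_cyl_append : wcat u ξ ∈ cyl (u ++ v) ↔ ξ ∈ cyl v := by
  constructor
  · rintro ⟨η, hη⟩
    rw [wcat_append] at hη
    exact ⟨η, Stream'.append_right_injective _ _ _ hη⟩
  · rintro ⟨η, rfl⟩
    exact ⟨η, (wcat_append u v η).symm⟩

theorem cyl_append_subset (u v : List X) : cyl (u ++ v) ⊆ cyl u := by
  rintro _ ⟨η, rfl⟩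
  rw [wcat_append]
  exact wcat_mem_cyl _ _

theorem mem_cyl_take (n : ℕ) (ξ : ℕ → X) : ξ ∈ cyl (Stream'.take n ξ) :=
  ⟨Stream'.drop n ξ, (Stream'.append_take_drop n ξ).symm⟩

theorem mem_cyl_iff : ξ ∈ cyl w ↔ ∀ i (hi : i < w.length), ξ i = w[i] := by
  constructor
  · rintro ⟨η, rfl⟩ i hi
    exact Stream'.get_append_left _ _ _ hi
  · intro h
    have htake : Stream'.take w.length ξ = w :=
      List.ext_getElem (Stream'.length_take _ _) fun i _ hi =>
        (Stream'.take_get _ _ _ _).trans (h i hi)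
    exact htake ▸ mem_cyl_take w.length ξ

theorem prefix_of_mem_cyl (hu : ξ ∈ cyl u) (hv : ξ ∈ cyl v) (huv : u.length ≤ v.length) :
    u <+: v :=
  List.prefix_iff_getElem.2
    ⟨huv, fun i hi => (mem_cyl_iff.1 hu i hi).symm.trans (mem_cyl_iff.1 hv i _)⟩

theorem cyl_eq_cylinder (hξ : ξ ∈ cyl w) : cyl w = PiNat.cylinder ξ w.length := by
  ext η
  rw [mem_cyl_iff, PiNat.mem_cylinder_iff]
  exact forall₂_congr fun i hi => by rw [mem_cyl_iff.1 hξ i hi]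

theorem cyl_take (n : ℕ) (ξ : ℕ → X) : cyl (Stream'.take n ξ) = PiNat.cylinder ξ n := by
  have hlength : (Stream'.take n ξ).length = n := Stream'.length_take n ξ
  rw [cyl_eq_cylinder (mem_cyl_take n ξ), hlength]

theorem exists_forall_mem_cyl_flatten {f : ℕ → List X} (hf : ∀ i, f i ≠ []) :
    ∃ ξ : ℕ → X, ∀ k, ξ ∈ cyl ((List.range k).map f).flatten := by
  set p : ℕ → List X := fun k => ((List.range k).map f).flatten
  have hlength (k) : k ≤ (p k).length := by
    have h := length_le_length_flatten (l := (List.range k).map f) (by simp [hf])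
    rwa [List.length_map, List.length_range] at h
  have hprefix {j k} (hjk : j ≤ k) : p j <+: p k := by
    obtain ⟨m, rfl⟩ := Nat.exists_eq_add_of_le hjk
    simp only [p, List.range_add, List.map_append, List.flatten_append, List.prefix_append]
  refine ⟨fun n => (p (n + 1))[n]'(hlength (n + 1)), fun k => mem_cyl_iff.2 fun i hi => ?_⟩
  rcases le_total (i + 1) k with h | h
  · exact (hprefix h).getElem _
  · exact ((hprefix h).getElem hi).symm

end Cylinders

section OmegaPower

variable {V : Language X} {S : Set (ℕ → X)} {ξ : ℕ → X}

theorem subset_omegaPow (hS : S ⊆ catOmega (V - 1) S) : S ⊆ omegaPow V := by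
  intro ξ hξ
  have hS : ∀ ξ ∈ S, ∃ v ∈ V - 1, ∃ η ∈ S, ξ = wcat v η := hS
  choose! head hhead tail htail heq using hS
  have hiter (k) : tail^[k] ξ ∈ S := (mapsTo_iff_subset_preimage.2 htail).iterate k hξ
  refine ⟨fun k => head (tail^[k] ξ), fun i => (Language.mem_sub _ _ _).1 (hhead _ (hiter i)),
    fun k => ⟨tail^[k] ξ, ?_⟩⟩
  induction k with
  | zero => rfl
  | succ k ih =>
    rw [List.range_succ, List.map_append, List.flatten_append, wcat_append,
      Function.iterate_succ_apply', List.map_singleton, List.flatten_singleton,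
      ← heq _ (hiter k), ← ih]

theorem omegaPow_subset_catOmega (V : Language X) :
    omegaPow V ⊆ catOmega (V - 1) (omegaPow V) := by
  rintro ξ ⟨f, hf, hξ⟩
  have hprefix (k) : ((List.range (k + 1)).map f).flatten =
      f 0 ++ ((List.range k).map (f ∘ Nat.succ)).flatten := by
    rw [List.range_succ_eq_map, List.map_cons, List.flatten_cons, List.map_map]
  obtain ⟨η, rfl⟩ := cyl_append_subset _ _ (hprefix 0 ▸ hξ 1)
  refine ⟨f 0, (Language.mem_sub _ _ _).2 (hf 0), η, ⟨f ∘ Nat.succ, fun i => hf (i + 1), ?_⟩, rfl⟩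
  exact fun k => wcat_mem_cyl_append.1 (hprefix k ▸ hξ (k + 1))

theorem omegaPow_kstar_subset (V : Language X) : omegaPow (V∗) ⊆ omegaPow V := by
  have hstep : catOmega (V∗ - 1) (omegaPow (V∗)) ⊆
      catOmega (V - 1) (catOmega (V∗) (omegaPow (V∗))) := by
    rintro _ ⟨c, ⟨hc, hne⟩, ξ, hξ, rfl⟩
    obtain ⟨L, rfl, hL⟩ := Language.mem_kstar_iff_exists_nonempty.1 hc
    cases L with
    | nil => exact absurd rfl hne
    | cons v L =>
      rw [List.forall_mem_cons] at hL
      exact ⟨v, (Language.mem_sub _ _ _).2 hL.1, wcat L.flatten ξ,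
        ⟨_, Language.join_mem_kstar fun u hu => (hL.2 u hu).1, ξ, hξ, rfl⟩, wcat_append ..⟩
  have hunfold : omegaPow (V∗) ⊆ catOmega (V - 1) (catOmega (V∗) (omegaPow (V∗))) :=
    (omegaPow_subset_catOmega _).trans hstep
  have hfixed : catOmega (V∗) (omegaPow (V∗)) ⊆ omegaPow V := by
    refine subset_omegaPow ?_
    rintro _ ⟨c, hc, ξ, hξ, rfl⟩
    by_cases hne : c = []
    · subst hne
      exact hunfold hξ
    · exact hstep ⟨c, ⟨hc, hne⟩, ξ, hξ, rfl⟩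
  exact fun ξ hξ => hfixed ⟨[], Language.nil_mem_kstar V, ξ, hξ, rfl⟩

theorem exists_append_mem_kstar {u : List X} (hξ : ξ ∈ omegaPow V) (hu : ξ ∈ cyl u) :
    ∃ t, u ++ t ∈ V∗ := by
  obtain ⟨f, hf, hcyl⟩ := hξ
  set l := (List.range u.length).map f
  have hl {P : List X → Prop} (hP : ∀ i, P (f i)) : ∀ w ∈ l, P w := by simp [l, hP]
  have hlength : u.length ≤ l.flatten.length := by
    simpa [l] using length_le_length_flatten (hl fun i => (hf i).2)
  obtain ⟨t, ht⟩ := prefix_of_mem_cyl hu (hcyl u.length) hlength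
  exact ⟨t, ht ▸ Language.join_mem_kstar (hl fun i => (hf i).1)⟩

end OmegaPower

theorem Disjunctive.of_wcat {w : List X} {η : ℕ → X} (h : Disjunctive (wcat w η)) :
    Disjunctive η := by
  intro z
  obtain ⟨u, hu⟩ := h (w ++ z)
  rw [← List.append_assoc] at hu
  obtain ⟨s, hs⟩ := prefix_of_mem_cyl (wcat_mem_cyl w η) (cyl_append_subset _ _ hu) (by simp)
  rw [← hs, List.append_assoc] at hu
  exact ⟨s, wcat_mem_cyl_append.1 hu⟩

theorem Disjunctive.not_isNowhereDenseLang {V : Language X} {η : ℕ → X} (hη : Disjunctive η)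
    (hmem : η ∈ omegaPow V) (hV : (V∗).IsRegular) : ¬ IsNowhereDenseLang (V∗) := by
  intro hdense
  obtain ⟨z, hz⟩ := hdense.exists_forall_notMem hV
  obtain ⟨u, hu⟩ := hη z
  obtain ⟨t, ht⟩ := exists_append_mem_kstar hmem hu
  exact hz u t ht

section Category

attribute [local instance] cantorTop

open TopologicalSpace

theorem isTopologicalBasis_cyl : IsTopologicalBasis (range (cyl (X := X))) := by
  let _ : TopologicalSpace X := ⊥
  have : DiscreteTopology X := ⟨rfl⟩
  refine isTopologicalBasis_of_isOpen_of_nhds ?_ fun ξ U hξ hU => ?_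
  · rintro _ ⟨w, rfl⟩
    rcases (cyl w).eq_empty_or_nonempty with hw | ⟨ξ, hξ⟩
    · exact hw ▸ isOpen_empty
    · exact cyl_eq_cylinder hξ ▸ PiNat.isOpen_cylinder (fun _ => X) ξ w.length
  · obtain ⟨_, ⟨η, n, rfl⟩, hmem, hsub⟩ :=
      (PiNat.isTopologicalBasis_cylinders fun _ => X).exists_subset_of_mem_open hξ hU
    refine ⟨_, ⟨Stream'.take n ξ, rfl⟩, mem_cyl_take n ξ, ?_⟩
    rwa [cyl_take, PiNat.mem_cylinder_iff_eq.1 hmem]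

theorem isOpen_cyl (w : List X) : IsOpen (cyl w) :=
  isTopologicalBasis_cyl.isOpen ⟨w, rfl⟩

theorem exists_cyl_append_subset [Nonempty X] {U : Set (ℕ → X)} (hU : IsOpen U) (hd : Dense U)
    (p : List X) : ∃ y, cyl (p ++ y) ⊆ U := by
  obtain ⟨ξ, ⟨η, rfl⟩, hξU⟩ := hd.inter_open_nonempty _ (isOpen_cyl p)
    ⟨_, wcat_mem_cyl p (Classical.arbitrary _)⟩
  obtain ⟨_, ⟨q, rfl⟩, hq, hqU⟩ := isTopologicalBasis_cyl.exists_subset_of_mem_open hξU hU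
  have hmem : wcat p η ∈ cyl (p ++ Stream'.take q.length η) :=
    wcat_mem_cyl_append.2 (mem_cyl_take _ η)
  have hlength : (Stream'.take q.length η).length = q.length := Stream'.length_take _ _
  obtain ⟨t, ht⟩ := prefix_of_mem_cyl hq hmem (by simp [hlength])
  exact ⟨_, ht ▸ (cyl_append_subset q t).trans hqU⟩

theorem isOpen_infixOcc (z : List X) : IsOpen (infixOcc z) := by
  simp only [infixOcc, ofPred_exists]
  exact isOpen_iUnion fun u => isOpen_cyl _

theorem dense_infixOcc (z : List X) : Dense (infixOcc z) := by
  refine isTopologicalBasis_cyl.dense_iff.2 ?_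
  rintro _ ⟨u, rfl⟩ ⟨ξ, -⟩
  exact ⟨wcat (u ++ z) ξ, cyl_append_subset u z (wcat_mem_cyl _ ξ), u, wcat_mem_cyl _ ξ⟩

theorem isMeagre_setOf_not_disjunctive [Countable X] :
    IsMeagre {ξ : ℕ → X | ¬ Disjunctive ξ} := by
  have hset : {ξ : ℕ → X | ¬ Disjunctive ξ} = ⋃ z, (infixOcc z)ᶜ := by
    ext ξ
    simp [Disjunctive]
  rw [hset]
  refine isMeagre_iUnion fun z => ?_
  rw [IsMeagre, compl_compl]
  exact residual_of_dense_open (isOpen_infixOcc z) (dense_infixOcc z)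

theorem exists_mem_omegaPow_forall_mem [Nonempty X] {L : Language X}
    (hL : ¬ IsNowhereDenseLang L) {U : ℕ → Set (ℕ → X)} (hU : ∀ n, IsOpen (U n))
    (hd : ∀ n, Dense (U n)) (w : List X) : ∃ η ∈ omegaPow L, ∀ n, wcat w η ∈ U n := by
  obtain ⟨v, hv⟩ : ∃ v, ∀ y, ∃ t, v ++ y ++ t ∈ L := by
    simpa [IsNowhereDenseLang] using hL
  have hblock (n) (p : List X) : ∃ b ∈ L, b ≠ [] ∧ cyl (p ++ b) ⊆ U n := by
    let a : X := Classical.arbitrary X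
    obtain ⟨y, hy⟩ := exists_cyl_append_subset (hU n) (hd n) (p ++ (v ++ [a]))
    obtain ⟨t, ht⟩ := hv (a :: y)
    refine ⟨_, ht, by simp, ?_⟩
    have hassoc : p ++ (v ++ a :: y ++ t) = p ++ (v ++ [a]) ++ y ++ t := by simp
    exact hassoc ▸ (cyl_append_subset _ t).trans hy
  choose block hmem hne hsub using hblock
  let p : ℕ → List X := Nat.rec w fun n q => q ++ block n q
  let f : ℕ → List X := fun n => block n (p n)
  have hp (n) : p n = w ++ ((List.range n).map f).flatten := by
    induction n with
    | zero => simp [p]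
    | succ n ih =>
      rw [List.range_succ, List.map_append, List.flatten_append, ← List.append_assoc, ← ih]
      simp [p, f]
  obtain ⟨η, hη⟩ := exists_forall_mem_cyl_flatten (f := f) fun n => hne n (p n)
  refine ⟨η, ⟨f, fun n => ⟨hmem n _, hne n _⟩, hη⟩, fun n => hsub n (p n) ?_⟩
  have hcyl : wcat w η ∈ cyl (p (n + 1)) := hp (n + 1) ▸ wcat_mem_cyl_append.2 (hη (n + 1))
  exact hcyl

theorem not_isMeagre_catOmega_omegaPow [Nonempty X] {W L : Language X} {w : List X} (hw : w ∈ W)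
    (hL : ¬ IsNowhereDenseLang L) : ¬ IsMeagre (catOmega W (omegaPow L)) := by
  intro hmeagre
  obtain ⟨𝒰, hopen, hdense, hcount, hsub⟩ := mem_residual_iff.1 hmeagre
  obtain ⟨U, hU⟩ := (hcount.insert univ).exists_eq_range (insert_nonempty _ _)
  have hmem (n) : U n = univ ∨ U n ∈ 𝒰 := mem_insert_iff.1 (hU ▸ mem_range_self n)
  obtain ⟨η, hη, hηU⟩ := exists_mem_omegaPow_forall_mem hL (U := U)
    (fun n => (hmem n).elim (fun h => h ▸ isOpen_univ) (hopen _))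
    (fun n => (hmem n).elim (fun h => h ▸ dense_univ) (hdense _)) w
  refine hsub (fun V hV => ?_) ⟨w, hw, η, hη, rfl⟩
  obtain ⟨n, rfl⟩ : V ∈ range U := hU ▸ mem_insert_of_mem _ hV
  exact hηU n

theorem stmt5_general [Countable X] {ι : Sort*} (W V : ι → Language X)
    (hV : ∀ i, ((V i)∗).IsRegular) :
    IsMeagre (⋃ i, catOmega (W i) (omegaPow (V i))) ↔
      ∀ ζ ∈ ⋃ i, catOmega (W i) (omegaPow (V i)), ¬ Disjunctive ζ := by
  refine ⟨fun hF ζ hζ hdisj => ?_, fun h => isMeagre_setOf_not_disjunctive.mono h⟩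
  obtain ⟨i, w, hw, η, hη, rfl⟩ := mem_iUnion.1 hζ
  have : Nonempty X := ⟨η 0⟩
  have hstar : ¬ IsNowhereDenseLang ((V i)∗) := hdisj.of_wcat.not_isNowhereDenseLang hη (hV i)
  refine not_isMeagre_catOmega_omegaPow hw hstar (hF.mono ?_)
  rintro _ ⟨u, hu, θ, hθ, rfl⟩
  exact mem_iUnion.2 ⟨i, u, hu, θ, omegaPow_kstar_subset (V i) hθ, rfl⟩

end Category

theorem stmt5 {X : Type} [Fintype X] (hX : 2 ≤ Fintype.card X)
    (F : Set (ℕ → X)) (hreg : IsRegOmega F) :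
    @IsMeagre _ (cantorTop X) F ↔ ∀ ζ ∈ F, ¬ Disjunctive ζ := by
  obtain ⟨n, W, V, h, rfl⟩ := hreg
  exact stmt5_general W V fun i => isRegular_kstar (h i).2.isRegular

end AutoBaire
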